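/- Set b(p) := √(λ₀ − 2Γ(p)) and z(p) := ∫_{p₀}^p b(p₀)³/b(s)³ ds. Suppose w : [p₀,0] → ℝ is C¹ with w(p₀) = w′(p₀) = 0 and p ↦ b(p)³w′(p) is differentiable on (p₀,0) with derivative b·z. Then λ₀^{3/2}·w′(0) − σ·z(0) − g·w(0) ≤ 0 if and only if ∫_{p₀}^0 b(p)·(∫_{p₀}^p b(s)^{−3} ds)² dp ≤ σ/g². -/

import Mathlib

open Set

/-!
Write `κ = b³` and `Y(p) = ∫_{p₀}^p 1/κ`, so that `z = κ(p₀) Y`. Both `w` and `Y` solve problems for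
the operator `u ↦ (κ u′)′`, namely `(κ w′)′ = b z` and `(κ Y′)′ = 0`. Integrating `Y · (κ w′)′` by
parts therefore expresses `∫ b z Y = κ(p₀) ∫ b Y²` through boundary values:
`κ(p₀) ∫ b Y² = Y(0) κ(0) w′(0) − w(0)`. Since `Y(0) = 1/g`, the boundary functional in question is
`g κ(p₀) (∫ b Y² − σ/g²)`.
-/

open MeasureTheory
open scoped Interval

section Primitive

variable {E : Type*} [NormedAddCommGroup E] [NormedSpace ℝ E] [CompleteSpace E] {a c : ℝ}

lemma hasDerivAt_integral_of_continuousOn_uIcc {f : ℝ → E} (hf : ContinuousOn f [[a, c]]) {x : ℝ}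
    (hx : x ∈ Ioo (min a c) (max a c)) : HasDerivAt (fun u ↦ ∫ s in a..u, f s) (f x) x := by
  have hx' : x ∈ [[a, c]] := Ioo_subset_Icc_self hx
  have hint : IntervalIntegrable f volume a x :=
    (hf.mono (uIcc_subset_uIcc_left hx')).intervalIntegrable
  have hfo : ContinuousOn f (Ioo (min a c) (max a c)) := hf.mono Ioo_subset_Icc_self
  exact intervalIntegral.integral_hasDerivAt_right hint
    (hfo.stronglyMeasurableAtFilter isOpen_Ioo x hx) (hfo.continuousAt (isOpen_Ioo.mem_nhds hx))

lemma integral_primitive_smul_deriv {f : ℝ → ℝ} {v v' : ℝ → E} (hf : ContinuousOn f [[a, c]])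
    (hv : ContinuousOn v [[a, c]])
    (hvv' : ∀ x ∈ Ioo (min a c) (max a c), HasDerivAt v (v' x) x)
    (hv' : IntervalIntegrable v' volume a c) :
    ∫ x in a..c, (∫ s in a..x, f s) • v' x =
      (∫ s in a..c, f s) • v c - ∫ x in a..c, f x • v x := by
  have hF : ContinuousOn (fun x ↦ ∫ s in a..x, f s) [[a, c]] :=
    intervalIntegral.continuousOn_primitive_interval' hf.intervalIntegrable left_mem_uIcc
  simpa only [intervalIntegral.integral_same, zero_smul, sub_zero] using
    intervalIntegral.integral_smul_deriv_eq_deriv_smul_of_hasDerivAt hF hv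
      (fun x hx ↦ hasDerivAt_integral_of_continuousOn_uIcc hf hx) hvv' hf.intervalIntegrable hv'

lemma integral_primitive_inv_smul_deriv_smul {κ : ℝ → ℝ} {w w' f : ℝ → E}
    (hκ : ContinuousOn κ [[a, c]]) (hκ0 : ∀ x ∈ [[a, c]], κ x ≠ 0)
    (hw : ContinuousOn w [[a, c]]) (hw' : ContinuousOn w' [[a, c]])
    (hww' : ∀ x ∈ Ioo (min a c) (max a c), HasDerivAt w (w' x) x)
    (hflux : ∀ x ∈ Ioo (min a c) (max a c), HasDerivAt (fun s ↦ κ s • w' s) (f x) x)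
    (hf : IntervalIntegrable f volume a c) :
    ∫ x in a..c, (∫ s in a..x, (κ s)⁻¹) • f x =
      (∫ s in a..c, (κ s)⁻¹) • κ c • w' c - (w c - w a) := by
  have hcancel : ∫ x in a..c, (κ x)⁻¹ • κ x • w' x = ∫ x in a..c, w' x :=
    intervalIntegral.integral_congr fun x hx ↦ inv_smul_smul₀ (hκ0 x hx) (w' x)
  have hftc : ∫ x in a..c, w' x = w c - w a :=
    intervalIntegral.integral_eq_sub_of_hasDeriv_right hw
      (fun x hx ↦ (hww' x hx).hasDerivWithinAt) hw'.intervalIntegrable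
  rw [← hftc, ← hcancel]
  exact integral_primitive_smul_deriv (hκ.inv₀ hκ0) (hκ.smul hw') hflux hf

end Primitive

section BoundaryFunctional

variable {a c g : ℝ} {κ ρ w w' : ℝ → ℝ}

lemma const_mul_integral_mul_sq_primitive_inv (k : ℝ) (hκ : ContinuousOn κ [[a, c]])
    (hκ0 : ∀ x ∈ [[a, c]], κ x ≠ 0) (hρ : IntervalIntegrable ρ volume a c)
    (hw : ContinuousOn w [[a, c]]) (hw' : ContinuousOn w' [[a, c]])
    (hww' : ∀ x ∈ Ioo (min a c) (max a c), HasDerivAt w (w' x) x)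
    (hode : ∀ x ∈ Ioo (min a c) (max a c),
      HasDerivAt (fun s ↦ κ s * w' s) (ρ x * (k * ∫ s in a..x, (κ s)⁻¹)) x) :
    k * ∫ x in a..c, ρ x * (∫ s in a..x, (κ s)⁻¹) ^ 2 =
      (∫ s in a..c, (κ s)⁻¹) * (κ c * w' c) - (w c - w a) := by
  have hY : ContinuousOn (fun x ↦ ∫ s in a..x, (κ s)⁻¹) [[a, c]] :=
    intervalIntegral.continuousOn_primitive_interval' (hκ.inv₀ hκ0).intervalIntegrable
      left_mem_uIcc
  have hrhs : IntervalIntegrable (fun x ↦ ρ x * (k * ∫ s in a..x, (κ s)⁻¹)) volume a c :=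
    hρ.mul_continuousOn (continuousOn_const.mul hY)
  calc k * ∫ x in a..c, ρ x * (∫ s in a..x, (κ s)⁻¹) ^ 2
      = ∫ x in a..c, (∫ s in a..x, (κ s)⁻¹) * (ρ x * (k * ∫ s in a..x, (κ s)⁻¹)) := by
        rw [← intervalIntegral.integral_const_mul]
        congr with x
        ring
    _ = (∫ s in a..c, (κ s)⁻¹) * (κ c * w' c) - (w c - w a) :=
        integral_primitive_inv_smul_deriv_smul hκ hκ0 hw hw' hww' hode hrhs

lemma boundary_terms_eq_mul_integral_sub (σ : ℝ) (hκ : ContinuousOn κ [[a, c]])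
    (hκ0 : ∀ x ∈ [[a, c]], κ x ≠ 0) (hρ : IntervalIntegrable ρ volume a c)
    (hnorm : g * ∫ s in a..c, (κ s)⁻¹ = 1)
    (hw : ContinuousOn w [[a, c]]) (hw' : ContinuousOn w' [[a, c]])
    (hww' : ∀ x ∈ Ioo (min a c) (max a c), HasDerivAt w (w' x) x)
    (hode : ∀ x ∈ Ioo (min a c) (max a c),
      HasDerivAt (fun s ↦ κ s * w' s) (ρ x * ∫ s in a..x, κ a / κ s) x) :
    κ c * w' c - σ * (∫ s in a..c, κ a / κ s) - g * (w c - w a) =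
      g * κ a * ((∫ x in a..c, ρ x * (∫ s in a..x, (κ s)⁻¹) ^ 2) - σ / g ^ 2) := by
  have hz (x : ℝ) : ∫ s in a..x, κ a / κ s = κ a * ∫ s in a..x, (κ s)⁻¹ := by
    simp only [div_eq_mul_inv, intervalIntegral.integral_const_mul]
  have hg : g ≠ 0 := left_ne_zero_of_mul_eq_one hnorm
  have hY : ∫ s in a..c, (κ s)⁻¹ = g⁻¹ := eq_inv_of_mul_eq_one_right hnorm
  simp only [hz] at hode
  have hparts := const_mul_integral_mul_sq_primitive_inv (κ a) hκ hκ0 hρ hw hw' hww' hode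
  rw [hz, hY]
  rw [hY] at hparts
  calc κ c * w' c - σ * (κ a * g⁻¹) - g * (w c - w a)
      = g * (g⁻¹ * (κ c * w' c) - (w c - w a)) - σ * (κ a * g⁻¹) := by
        field_simp
        ring
    _ = g * (κ a * ∫ x in a..c, ρ x * (∫ s in a..x, (κ s)⁻¹) ^ 2) - σ * (κ a * g⁻¹) := by
        rw [hparts]
    _ = g * κ a * ((∫ x in a..c, ρ x * (∫ s in a..x, (κ s)⁻¹) ^ 2) - σ / g ^ 2) := by
        field_simp

theorem stmt_12_general (σ : ℝ) (hac : a ≤ c) (hg : 0 < g) (hκ : ContinuousOn κ (Icc a c))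
    (hκ_pos : ∀ x ∈ Icc a c, 0 < κ x) (hρ : IntervalIntegrable ρ volume a c)
    (hnorm : g * ∫ s in a..c, (κ s)⁻¹ = 1)
    (hw : ContinuousOn w (Icc a c)) (hw' : ContinuousOn w' (Icc a c))
    (hww' : ∀ x ∈ Ioo a c, HasDerivAt w (w' x) x) (hwa : w a = 0)
    (hode : ∀ x ∈ Ioo a c,
      HasDerivAt (fun s ↦ κ s * w' s) (ρ x * ∫ s in a..x, κ a / κ s) x) :
    κ c * w' c - σ * (∫ s in a..c, κ a / κ s) - g * w c ≤ 0 ↔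
      ∫ x in a..c, ρ x * (∫ s in a..x, (κ s)⁻¹) ^ 2 ≤ σ / g ^ 2 := by
  have hscale : 0 < g * κ a := mul_pos hg (hκ_pos a (left_mem_Icc.2 hac))
  have hκ0 : ∀ x ∈ Icc a c, κ x ≠ 0 := fun x hx ↦ (hκ_pos x hx).ne'
  have hIoo : Ioo (min a c) (max a c) = Ioo a c := by rw [min_eq_left hac, max_eq_right hac]
  rw [← uIcc_of_le hac] at hκ hκ0 hw hw'
  rw [← hIoo] at hww' hode
  have hboundary := boundary_terms_eq_mul_integral_sub σ hκ hκ0 hρ hnorm hw hw' hww' hode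
  rw [hwa, sub_zero] at hboundary
  rw [hboundary, ← smul_eq_mul, smul_nonpos_iff_nonpos_of_pos_left hscale, sub_nonpos]

end BoundaryFunctional

lemma sqrt_sub_two_mul_pos_of_two_mul_sSup_image_lt {α : Type*} {s : Set α} {f : α → ℝ} {l : ℝ}
    (hf : BddAbove (f '' s)) (hl : 2 * sSup (f '' s) < l) {x : α} (hx : x ∈ s) :
    0 < √(l - 2 * f x) := by
  have hle : f x ≤ sSup (f '' s) := le_csSup hf (mem_image_of_mem f hx)
  exact Real.sqrt_pos.2 (by linarith)

/-- With `b(p) := √(λ₀ − 2Γ(p))` and `z(p) := ∫_{p₀}^p b(p₀)³/b(s)³ ds`, if `w`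
satisfies `w(p₀) = w′(p₀) = 0` and `(b³w′)′ = b z` on `(p₀,0)`, then
`λ₀^{3/2} w′(0) − σ z(0) − g w(0) ≤ 0` iff
`∫_{p₀}^0 b(p)·(∫_{p₀}^p b(s)^{−3} ds)² dp ≤ σ/g²`. -/
theorem stmt_12 (p₀ g σ lam₀ : ℝ) (hp₀ : p₀ < 0) (hg : 0 < g) (hσ : 0 < σ)
    (Γ : ℝ → ℝ) (K : NNReal) (hΓ : LipschitzOnWith K Γ (Set.Icc p₀ 0)) (hΓ0 : Γ 0 = 0)
    (hlam₀ : 2 * sSup (Γ '' Set.Icc p₀ 0) < lam₀)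
    (hlam₀' : g * ∫ p in p₀..0, (Real.sqrt (lam₀ - 2 * Γ p) ^ 3)⁻¹ = 1)
    (w w' : ℝ → ℝ)
    (hw : ∀ p ∈ Set.Icc p₀ 0, HasDerivWithinAt w (w' p) (Set.Icc p₀ 0) p)
    (hwc : ContinuousOn w' (Set.Icc p₀ 0))
    (hw0 : w p₀ = 0) (hw1 : w' p₀ = 0)
    (hwode : ∀ p ∈ Set.Ioo p₀ 0,
      HasDerivAt (fun s => Real.sqrt (lam₀ - 2 * Γ s) ^ 3 * w' s)
        (Real.sqrt (lam₀ - 2 * Γ p)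
          * ∫ s in p₀..p,
              Real.sqrt (lam₀ - 2 * Γ p₀) ^ 3 / Real.sqrt (lam₀ - 2 * Γ s) ^ 3) p) :
    Real.sqrt lam₀ ^ 3 * w' 0
        - σ * (∫ s in p₀..0,
            Real.sqrt (lam₀ - 2 * Γ p₀) ^ 3 / Real.sqrt (lam₀ - 2 * Γ s) ^ 3)
        - g * w 0 ≤ 0 ↔
      (∫ p in p₀..0, Real.sqrt (lam₀ - 2 * Γ p)
          * (∫ s in p₀..p, (Real.sqrt (lam₀ - 2 * Γ s) ^ 3)⁻¹) ^ 2)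
        ≤ σ / g ^ 2 := by
  have hb : ContinuousOn (fun p ↦ √(lam₀ - 2 * Γ p)) (Icc p₀ 0) :=
    (continuousOn_const.sub (continuousOn_const.mul hΓ.continuousOn)).sqrt
  have hbdd : BddAbove (Γ '' Icc p₀ 0) := isCompact_Icc.bddAbove_image hΓ.continuousOn
  have hκ_pos : ∀ p ∈ Icc p₀ 0, 0 < √(lam₀ - 2 * Γ p) ^ 3 := fun p hp ↦
    pow_pos (sqrt_sub_two_mul_pos_of_two_mul_sSup_image_lt hbdd hlam₀ hp) 3
  have hw_deriv : ∀ p ∈ Ioo p₀ 0, HasDerivAt w (w' p) p := fun p hp ↦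
    (hw p (Ioo_subset_Icc_self hp)).hasDerivAt (Icc_mem_nhds hp.1 hp.2)
  have hgeneral := stmt_12_general (κ := fun p ↦ √(lam₀ - 2 * Γ p) ^ 3) σ hp₀.le hg
    (hb.pow 3) hκ_pos (hb.intervalIntegrable_of_Icc hp₀.le) hlam₀'
    (fun p hp ↦ (hw p hp).continuousWithinAt) hwc hw_deriv hw0 hwode
  simpa only [hΓ0, mul_zero, sub_zero] using hgeneral
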